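/- Let h = 2^d with d ≥ 1 and w ≥ 2, and let I_t = {p_{ij} : h/2 ≤ i ≤ h−1} be the top half of the image. Then the family of restrictions {tran_{−h/2,0}(T ∩ I_t) : T ∈ H_{h,w}} (i.e. the top halves of the FHT patterns, translated down by h/2 rows) is exactly the FHT pattern set H_{h/2,w} of height h/2. The analogous statement holds for the bottom half I_b = {p_{ij} : 0 ≤ i < h/2}: {T ∩ I_b : T ∈ H_{h,w}} = H_{h/2,w}. -/

import Mathlib

/-!
FHT patterns. Pixels are pairs `(i, j) : ℕ × ℕ` (row `i`, column `j`).
-/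

/-- Width-cyclic translation `tran_{a,b}`: shift rows up by `a` and columns by `b`
cyclically modulo the image width `w`. -/
def tran (w a b : ℕ) (T : Finset (ℕ × ℕ)) : Finset (ℕ × ℕ) :=
  T.image fun p => (p.1 + a, (p.2 + b) % w)

/-- The column of the (unique, for FHT patterns) pixel of `T` in row `i`. -/
def colAt (T : Finset (ℕ × ℕ)) (i : ℕ) : ℕ :=
  ((T.filter fun p => p.1 = i).image Prod.snd).sup id

/-- Horizontal span `Δ(T) = (j_top - j_bot) mod w` of a pattern of height `h`. -/
def span (w h : ℕ) (T : Finset (ℕ × ℕ)) : ℕ :=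
  (colAt T (h - 1) + w - colAt T 0) % w

/-- The FHT pattern sets `H_k` (mostly vertical, inclined to the right) at image width `w`:
`H_0` consists of the single bottom pixels, and `H_{k}` is obtained by stacking a translated
copy of each `T ∈ H_{k-1}` on top of itself, with horizontal shift `Δ(T) + s`, `s ∈ {0, 1}`.
`H_{h,w}` for `h = 2 ^ d` is `FHT w d`. -/
def FHT (w : ℕ) : ℕ → Finset (Finset (ℕ × ℕ))
  | 0 => (Finset.range w).image fun j => ({(0, j)} : Finset (ℕ × ℕ))
  | k + 1 =>
      ((FHT w k) ×ˢ ({0, 1} : Finset ℕ)).image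
        fun q => q.1 ∪ tran w (2 ^ k) (span w (2 ^ k) q.1 + q.2) q.1

/-!
Cyclic column shifts map `H_k` to itself and preserve the span. Restricting
`T ∪ tran_{2^k, Δ(T)+s}(T)` to its bottom half returns `T`, and restricting it to its top half
returns `T` shifted by `Δ(T) + s` columns. The latter is again in `H_k`, and every `T ∈ H_k` arises
in this way: undo the shift by `Δ(T)`, which does not change the span.
-/

/-- A pattern of height `h` in an image of width `w`: exactly one pixel in each of the rows
`0, …, h - 1`, and no other pixels. The bottom row is normalised to be row `0`. -/
structure IsPattern (w h : ℕ) (T : Finset (ℕ × ℕ)) : Prop where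
  row_lt : ∀ p ∈ T, p.1 < h
  col_lt : ∀ p ∈ T, p.2 < w
  existsUnique : ∀ i < h, ∃! j, (i, j) ∈ T

section Translation

variable {w : ℕ}

theorem mk_mem_tran {i j : ℕ} {T : Finset (ℕ × ℕ)} (a b : ℕ) (h : (i, j) ∈ T) :
    (i + a, (j + b) % w) ∈ tran w a b T :=
  Finset.mem_image_of_mem (fun p : ℕ × ℕ => (p.1 + a, (p.2 + b) % w)) h

theorem mk_mem_tran_iff {a b i j : ℕ} {T : Finset (ℕ × ℕ)} :
    (i, j) ∈ tran w a b T ↔ ∃ i₀ j₀, (i₀, j₀) ∈ T ∧ i₀ + a = i ∧ (j₀ + b) % w = j := by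
  simp [tran]

theorem tran_union (a b : ℕ) (S T : Finset (ℕ × ℕ)) :
    tran w a b (S ∪ T) = tran w a b S ∪ tran w a b T :=
  Finset.image_union S T

theorem tran_tran (a b a' b' : ℕ) (T : Finset (ℕ × ℕ)) :
    tran w a b (tran w a' b' T) = tran w (a' + a) (b' + b) T := by
  simp [tran, Finset.image_image, Function.comp_def, Nat.add_assoc]

theorem tran_zero_eq_self {c : ℕ} {T : Finset (ℕ × ℕ)} (hc : w ∣ c) (hT : ∀ p ∈ T, p.2 < w) :
    tran w 0 c T = T := by
  obtain ⟨m, rfl⟩ := hc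
  have hfix : Set.EqOn (fun p : ℕ × ℕ => (p.1 + 0, (p.2 + w * m) % w)) id T := fun p hp => by
    simp [Nat.mod_eq_of_lt (hT p hp)]
  rw [tran, Finset.image_congr hfix, Finset.image_id]

end Translation

section Halves

variable {w h : ℕ} {T : Finset (ℕ × ℕ)}

theorem filter_lt_union_tran (hT : ∀ p ∈ T, p.1 < h) (c : ℕ) :
    (T ∪ tran w h c T).filter (fun p => p.1 < h) = T := by
  have htran : (tran w h c T).filter (fun p => p.1 < h) = ∅ := by
    simp [tran, Finset.filter_image]
  rw [Finset.filter_union, Finset.filter_true_of_mem hT, htran, Finset.union_empty]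

theorem image_sub_filter_le_union_tran (hT : ∀ p ∈ T, p.1 < h) (c : ℕ) :
    ((T ∪ tran w h c T).filter fun p => h ≤ p.1).image (fun p => (p.1 - h, p.2)) =
      tran w 0 c T := by
  have hbot : T.filter (fun p => h ≤ p.1) = ∅ :=
    Finset.filter_false_of_mem fun p hp => (hT p hp).not_ge
  have htop : (tran w h c T).filter (fun p => h ≤ p.1) = tran w h c T := by
    simp [tran, Finset.filter_image]
  rw [Finset.filter_union, hbot, htop, Finset.empty_union]
  simp [tran, Finset.image_image, Function.comp_def]

end Halves

theorem colAt_eq_of_unique {T : Finset (ℕ × ℕ)} {i j : ℕ} (hmem : (i, j) ∈ T)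
    (huniq : ∀ j', (i, j') ∈ T → j' = j) : colAt T i = j := by
  have hrow : T.filter (fun p => p.1 = i) = {(i, j)} := by
    ext ⟨a, b⟩
    simp only [Finset.mem_filter, Finset.mem_singleton, Prod.mk.injEq]
    constructor
    · rintro ⟨hab, rfl⟩
      exact ⟨rfl, huniq b hab⟩
    · rintro ⟨rfl, rfl⟩
      exact ⟨hmem, rfl⟩
  simp [colAt, hrow]

theorem mod_add_sub_mod_eq {w y : ℕ} (hy : y < w) (x b : ℕ) :
    ((x + b) % w + w - (y + b) % w) % w = (x + w - y) % w := by
  have hlt : (y + b) % w < w := Nat.mod_lt _ (by omega)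
  refine Nat.ModEq.add_right_cancel' (y + b) ?_
  calc (x + b) % w + w - (y + b) % w + (y + b)
      ≡ (x + b) % w + w - (y + b) % w + (y + b) % w [MOD w] :=
        (Nat.mod_modEq _ _).symm.add_left _
    _ = (x + b) % w + w := by omega
    _ ≡ (x + b) + w [MOD w] := (Nat.mod_modEq _ _).add_right _
    _ = x + w - y + (y + b) := by omega

namespace IsPattern

variable {w h : ℕ} {T : Finset (ℕ × ℕ)}

theorem singleton {j : ℕ} (hj : j < w) : IsPattern w 1 {(0, j)} where
  row_lt := by simp
  col_lt := by simpa using hj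
  existsUnique := by simp

theorem colAt_eq (hT : IsPattern w h T) {i j : ℕ} (hmem : (i, j) ∈ T) : colAt T i = j :=
  colAt_eq_of_unique hmem fun _ hmem' => (hT.existsUnique i (hT.row_lt _ hmem)).unique hmem' hmem

theorem colAt_mem (hT : IsPattern w h T) {i : ℕ} (hi : i < h) : (i, colAt T i) ∈ T := by
  obtain ⟨j, hj, -⟩ := hT.existsUnique i hi
  rwa [hT.colAt_eq hj]

theorem width_pos (hT : IsPattern w h T) {p : ℕ × ℕ} (hp : p ∈ T) : 0 < w :=
  Nat.zero_lt_of_lt (hT.col_lt p hp)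

theorem tran_zero (hT : IsPattern w h T) (b : ℕ) : IsPattern w h (tran w 0 b T) where
  row_lt := by
    rintro ⟨i, j⟩ hp
    obtain ⟨i, j, hmem, rfl, rfl⟩ := mk_mem_tran_iff.1 hp
    exact hT.row_lt (i, j) hmem
  col_lt := by
    rintro ⟨i, j⟩ hp
    obtain ⟨i, j, hmem, rfl, rfl⟩ := mk_mem_tran_iff.1 hp
    exact Nat.mod_lt _ (hT.width_pos hmem)
  existsUnique i hi := by
    refine ⟨_, mk_mem_tran 0 b (hT.colAt_mem hi), fun j hj => ?_⟩
    obtain ⟨i, j, hmem, rfl, rfl⟩ := mk_mem_tran_iff.1 hj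
    simp [hT.colAt_eq hmem]

theorem union_tran (hT : IsPattern w h T) (c : ℕ) :
    IsPattern w (h + h) (T ∪ tran w h c T) where
  row_lt := by
    rintro ⟨i, j⟩ hp
    rcases Finset.mem_union.1 hp with hbot | htop
    · exact Nat.lt_add_right h (hT.row_lt _ hbot)
    · obtain ⟨i, j, hmem, rfl, rfl⟩ := mk_mem_tran_iff.1 htop
      exact Nat.add_lt_add_right (hT.row_lt _ hmem) h
  col_lt := by
    rintro ⟨i, j⟩ hp
    rcases Finset.mem_union.1 hp with hbot | htop
    · exact hT.col_lt _ hbot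
    · obtain ⟨i, j, hmem, rfl, rfl⟩ := mk_mem_tran_iff.1 htop
      exact Nat.mod_lt _ (hT.width_pos hmem)
  existsUnique i hi := by
    rcases lt_or_ge i h with hlt | hge
    · refine ⟨_, Finset.mem_union_left _ (hT.colAt_mem hlt), fun j hj => ?_⟩
      rcases Finset.mem_union.1 hj with hbot | htop
      · exact (hT.colAt_eq hbot).symm
      · obtain ⟨i, j, -, rfl, -⟩ := mk_mem_tran_iff.1 htop
        omega
    · obtain ⟨i, rfl⟩ := Nat.exists_eq_add_of_le' hge
      have hi' : i < h := Nat.lt_of_add_lt_add_right hi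
      refine ⟨_, Finset.mem_union_right _ (mk_mem_tran h c (hT.colAt_mem hi')), fun j hj => ?_⟩
      rcases Finset.mem_union.1 hj with hbot | htop
      · exact absurd (hT.row_lt _ hbot) hge.not_gt
      · obtain ⟨i₀, j, hmem, hrow, rfl⟩ := mk_mem_tran_iff.1 htop
        obtain rfl : i₀ = i := Nat.add_right_cancel hrow
        rw [hT.colAt_eq hmem]

theorem colAt_tran_zero (hT : IsPattern w h T) (b : ℕ) {i : ℕ} (hi : i < h) :
    colAt (tran w 0 b T) i = (colAt T i + b) % w :=
  (hT.tran_zero b).colAt_eq (mk_mem_tran 0 b (hT.colAt_mem hi))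

theorem span_tran_zero (hT : IsPattern w h T) (hh : 0 < h) (b : ℕ) :
    span w h (tran w 0 b T) = span w h T := by
  rw [span, hT.colAt_tran_zero b (Nat.sub_one_lt_of_lt hh), hT.colAt_tran_zero b hh]
  exact mod_add_sub_mod_eq (hT.col_lt _ (hT.colAt_mem hh)) _ _

theorem tran_zero_span_tran_zero_sub_span (hT : IsPattern w h T) (hh : 0 < h) :
    tran w 0 (span w h (tran w 0 (w - span w h T) T)) (tran w 0 (w - span w h T) T) = T := by
  have hle : span w h T ≤ w := (Nat.mod_lt _ (hT.width_pos (hT.colAt_mem hh))).le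
  rw [hT.span_tran_zero hh, tran_tran, Nat.sub_add_cancel hle]
  exact tran_zero_eq_self dvd_rfl hT.col_lt

end IsPattern

section FHT

variable {w : ℕ}

theorem mem_FHT_zero {T : Finset (ℕ × ℕ)} : T ∈ FHT w 0 ↔ ∃ j < w, {(0, j)} = T := by
  simp [FHT]

theorem mem_FHT_succ {k : ℕ} {T : Finset (ℕ × ℕ)} :
    T ∈ FHT w (k + 1) ↔ ∃ S ∈ FHT w k, ∃ s ∈ ({0, 1} : Finset ℕ),
      S ∪ tran w (2 ^ k) (span w (2 ^ k) S + s) S = T := by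
  simp only [FHT, Finset.mem_image, Finset.mem_product, Prod.exists, and_assoc,
    exists_and_left]

theorem isPattern_of_mem_FHT {k : ℕ} {T : Finset (ℕ × ℕ)} (hT : T ∈ FHT w k) :
    IsPattern w (2 ^ k) T := by
  induction k generalizing T with
  | zero =>
    obtain ⟨j, hj, rfl⟩ := mem_FHT_zero.1 hT
    exact .singleton hj
  | succ k ih =>
    obtain ⟨S, hS, s, -, rfl⟩ := mem_FHT_succ.1 hT
    rw [pow_succ, mul_two]
    exact (ih hS).union_tran _

theorem tran_zero_mem_FHT {k : ℕ} {T : Finset (ℕ × ℕ)} (hT : T ∈ FHT w k) (b : ℕ) :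
    tran w 0 b T ∈ FHT w k := by
  induction k generalizing T with
  | zero =>
    obtain ⟨j, hj, rfl⟩ := mem_FHT_zero.1 hT
    exact mem_FHT_zero.2 ⟨(j + b) % w, Nat.mod_lt _ (Nat.zero_lt_of_lt hj), by simp [tran]⟩
  | succ k ih =>
    obtain ⟨S, hS, s, hs, rfl⟩ := mem_FHT_succ.1 hT
    refine mem_FHT_succ.2 ⟨tran w 0 b S, ih hS, s, hs, ?_⟩
    rw [(isPattern_of_mem_FHT hS).span_tran_zero (by positivity), tran_union, tran_tran, tran_tran,
      Nat.add_comm b, Nat.add_comm 0]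

theorem image_tran_zero_span_add_FHT (k : ℕ) :
    ((FHT w k ×ˢ ({0, 1} : Finset ℕ)).image
      fun q => tran w 0 (span w (2 ^ k) q.1 + q.2) q.1) = FHT w k := by
  refine Finset.Subset.antisymm (Finset.image_subset_iff.2 fun q hq => ?_) fun T hT => ?_
  · exact tran_zero_mem_FHT (Finset.mem_product.1 hq).1 _
  · refine Finset.mem_image.2 ⟨(tran w 0 (w - span w (2 ^ k) T) T, 0), ?_, ?_⟩
    · exact Finset.mk_mem_product (tran_zero_mem_FHT hT _) (by simp)
    · exact (isPattern_of_mem_FHT hT).tran_zero_span_tran_zero_sub_span (by positivity)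

end FHT

/-- For `h = 2 ^ (d+1)` (so `d + 1 ≥ 1`) and `w ≥ 2`: the top halves of the FHT patterns,
translated down by `h / 2 = 2 ^ d` rows, form exactly the FHT pattern set of height `2 ^ d`,
and likewise the bottom halves form exactly the FHT pattern set of height `2 ^ d`. -/
theorem fht_halves (w d : ℕ) (hw : 2 ≤ w) :
    ((FHT w (d + 1)).image fun T =>
        (T.filter fun p => 2 ^ d ≤ p.1).image fun p => (p.1 - 2 ^ d, p.2)) = FHT w d ∧
    ((FHT w (d + 1)).image fun T => T.filter fun p => p.1 < 2 ^ d) = FHT w d := by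
  have row_lt : ∀ q ∈ FHT w d ×ˢ ({0, 1} : Finset ℕ), ∀ p ∈ q.1, p.1 < 2 ^ d := fun q hq =>
    (isPattern_of_mem_FHT (Finset.mem_product.1 hq).1).row_lt
  rw [FHT, Finset.image_image, Finset.image_image]
  constructor
  · calc _ = (FHT w d ×ˢ ({0, 1} : Finset ℕ)).image
            fun q => tran w 0 (span w (2 ^ d) q.1 + q.2) q.1 :=
          Finset.image_congr fun q hq => image_sub_filter_le_union_tran (row_lt q hq) _
      _ = FHT w d := image_tran_zero_span_add_FHT d
  · calc _ = (FHT w d ×ˢ ({0, 1} : Finset ℕ)).image Prod.fst :=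
          Finset.image_congr fun q hq => filter_lt_union_tran (row_lt q hq) _
      _ = FHT w d := Finset.product_image_fst (by simp)
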